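/- Let E be a real normed vector space, f : E → ℝ and φ : E → E functions of class C² (ContDiff ℝ 2) with f ∘ φ = f, and let x₀ ∈ E satisfy φ x₀ = x₀ and fderiv ℝ f x₀ = 0. Then the Hessian of f at x₀ is invariant under the derivative of the symmetry φ: for all v, w ∈ E, fderiv ℝ (fderiv ℝ f) x₀ (fderiv ℝ φ x₀ v) (fderiv ℝ φ x₀ w) = fderiv ℝ (fderiv ℝ f) x₀ v w. -/

import Mathlib

/-! In the chain rule `(f ∘ φ)' y = f' (φ y) ∘ φ' y`, the first factor is `O(‖y - x‖)` when `φ x` is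
a critical point of `f`. Replacing `φ' y` by `φ' x` then changes the product only by `o(‖y - x‖)`,
by continuity of `φ'`, so differentiating at `x` gives `(f ∘ φ)'' v w = f'' (φ' v) (φ' w)`; for a
symmetry, `f ∘ φ = f`. -/

open Asymptotics Filter
open scoped Topology

section

variable {𝕜 : Type*} [NontriviallyNormedField 𝕜]
  {E : Type*} [NormedAddCommGroup E] [NormedSpace 𝕜 E]
  {F : Type*} [NormedAddCommGroup F] [NormedSpace 𝕜 F]
  {G : Type*} [NormedAddCommGroup G] [NormedSpace 𝕜 G]
  {H : Type*} [NormedAddCommGroup H] [NormedSpace 𝕜 H]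

theorem hasFDerivAt_bilinear_of_left_eq_zero (B : F →L[𝕜] G →L[𝕜] H)
    {c : E → F} {c' : E →L[𝕜] F} {d : E → G} {x : E}
    (hc : HasFDerivAt c c' x) (hcx : c x = 0) (hd : ContinuousAt d x) :
    HasFDerivAt (fun y ↦ B (c y) (d y)) (B.flip (d x) ∘L c') x := by
  have hmain : HasFDerivAt (fun y ↦ B (c y) (d x)) (B.flip (d x) ∘L c') x :=
    (B.flip (d x)).hasFDerivAt.comp x hc
  have hc_bigO : c =O[𝓝 x] fun y ↦ y - x := by
    simpa only [hcx, sub_zero] using hc.isBigO_sub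
  have hd_littleO : (fun y ↦ d y - d x) =o[𝓝 x] fun _ ↦ (1 : ℝ) :=
    (isLittleO_one_iff ℝ).2 (tendsto_sub_nhds_zero_iff.2 hd)
  have hremainder : (fun y ↦ B (c y) (d y - d x)) =o[𝓝 x] fun y ↦ y - x := by
    have hB : (fun y ↦ B (c y) (d y - d x)) =O[𝓝 x] fun y ↦ ‖c y‖ * ‖d y - d x‖ :=
      .of_bound ‖B‖ <| .of_forall fun y ↦ by
        simpa only [norm_mul, norm_norm, mul_assoc] using B.le_opNorm₂ (c y) (d y - d x)
    refine hB.trans_isLittleO ?_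
    simpa only [mul_one, isLittleO_norm_right] using
      hc_bigO.norm_norm.mul_isLittleO hd_littleO.norm_left
  have hremainder_deriv : HasFDerivAt (fun y ↦ B (c y) (d y - d x)) (0 : E →L[𝕜] H) x :=
    .of_isLittleO <| by simpa [hcx] using hremainder
  simpa [← map_add] using hmain.fun_add hremainder_deriv

theorem hasFDerivAt_fderiv_comp_of_fderiv_eq_zero {f : F → G} {φ : E → F} {x : E}
    {f'' : F →L[𝕜] F →L[𝕜] G} (hf : ∀ᶠ z in 𝓝 (φ x), DifferentiableAt 𝕜 f z)
    (hf'' : HasFDerivAt (fderiv 𝕜 f) f'' (φ x)) (hφ : ContDiffAt 𝕜 1 φ x)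
    (hcrit : fderiv 𝕜 f (φ x) = 0) :
    HasFDerivAt (fderiv 𝕜 (f ∘ φ)) (f''.bilinearComp (fderiv 𝕜 φ x) (fderiv 𝕜 φ x)) x := by
  have hchain : fderiv 𝕜 (f ∘ φ) =ᶠ[𝓝 x] fun y ↦ fderiv 𝕜 f (φ y) ∘L fderiv 𝕜 φ y := by
    filter_upwards [hφ.continuousAt.eventually hf, hφ.eventually (by simp)] with y hfy hφy
    exact fderiv_comp y hfy (hφy.differentiableAt one_ne_zero)
  have houter : HasFDerivAt (fun y ↦ fderiv 𝕜 f (φ y)) (f'' ∘L fderiv 𝕜 φ x) x :=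
    hf''.comp x (hφ.differentiableAt one_ne_zero).hasFDerivAt
  have hproduct := hasFDerivAt_bilinear_of_left_eq_zero (ContinuousLinearMap.compL 𝕜 E F G)
    houter hcrit (hφ.continuousAt_fderiv one_ne_zero)
  exact hproduct.congr_of_eventuallyEq hchain

theorem hessian_invariant_under_symmetry_general {f : E → F} {φ : E → E} {x₀ : E}
    (hf : ∀ᶠ y in 𝓝 x₀, DifferentiableAt 𝕜 f y) (hf' : DifferentiableAt 𝕜 (fderiv 𝕜 f) x₀)
    (hφ : ContDiffAt 𝕜 1 φ x₀) (hsym : f ∘ φ =ᶠ[𝓝 x₀] f) (hfix : φ x₀ = x₀)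
    (hcrit : fderiv 𝕜 f x₀ = 0) (v w : E) :
    fderiv 𝕜 (fderiv 𝕜 f) x₀ (fderiv 𝕜 φ x₀ v) (fderiv 𝕜 φ x₀ w) =
      fderiv 𝕜 (fderiv 𝕜 f) x₀ v w := by
  have hcomp : HasFDerivAt (fderiv 𝕜 (f ∘ φ))
      ((fderiv 𝕜 (fderiv 𝕜 f) (φ x₀)).bilinearComp (fderiv 𝕜 φ x₀) (fderiv 𝕜 φ x₀)) x₀ :=
    hasFDerivAt_fderiv_comp_of_fderiv_eq_zero (by rwa [hfix]) (by rw [hfix]; exact hf'.hasFDerivAt)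
      hφ (by rwa [hfix])
  calc
    fderiv 𝕜 (fderiv 𝕜 f) x₀ (fderiv 𝕜 φ x₀ v) (fderiv 𝕜 φ x₀ w)
      = fderiv 𝕜 (fderiv 𝕜 (f ∘ φ)) x₀ v w := by
        rw [hcomp.fderiv, ContinuousLinearMap.bilinearComp_apply, hfix]
    _ = fderiv 𝕜 (fderiv 𝕜 f) x₀ v w := by rw [hsym.fderiv.fderiv_eq]

end

/-- The Hessian at a fixed critical point is invariant under the derivative of a
symmetry of the function. -/
theorem hessian_invariant_under_symmetry
    {E : Type*} [NormedAddCommGroup E] [NormedSpace ℝ E]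
    (f : E → ℝ) (φ : E → E) (hf : ContDiff ℝ 2 f) (hφ : ContDiff ℝ 2 φ)
    (hsym : f ∘ φ = f) (x₀ : E) (hfix : φ x₀ = x₀) (hcrit : fderiv ℝ f x₀ = 0)
    (v w : E) :
    fderiv ℝ (fderiv ℝ f) x₀ (fderiv ℝ φ x₀ v) (fderiv ℝ φ x₀ w) =
      fderiv ℝ (fderiv ℝ f) x₀ v w := by
  have hf' : ContDiff ℝ 1 (fderiv ℝ f) := hf.fderiv_right one_add_one_eq_two.le
  exact hessian_invariant_under_symmetry_general (.of_forall (hf.differentiable two_ne_zero))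
    (hf'.differentiable one_ne_zero x₀) (hφ.contDiffAt.of_le one_le_two) hsym.eventuallyEq
    hfix hcrit v w
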